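/- arXiv:math/0703532 — 3 statements merged into one kernel-verified Lean document; each statement's English description precedes it below -/
import Mathlib

section
/- Let Γ be a finite group and consider a walk setup on Γ (symmetric primitive adjacency matrix A : Fin n → Fin n → ℕ with vertex labels t : Fin n → Γ) such that the set {t i : i : Fin n} generates Γ, and such that for every group homomorphism ρ : Γ →* ℂˣ with ρ not identically 1 there exist indices i, j with ρ (t i) ≠ ρ (t j). Then there exist constants C > 0 and c with 0 < c < 1 such that for every N ≥ 1 and every γ ∈ Γ, |P_N(γ) − 1/|Γ|| ≤ C · c^N; in particular the distributions P_N converge to the uniform distribution on Γ. -/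
open scoped BigOperators

namespace WalkAux

set_option linter.unusedSectionVars false

variable {Γ : Type*} [Group Γ] [Fintype Γ] [DecidableEq Γ] {n : ℕ}

/-- Weighted number of walks of length `N` from `i` to `j` with product `γ`
(the label of the starting vertex is not included). -/
def W (A : Fin n → Fin n → ℕ) (t : Fin n → Γ) : ℕ → Fin n → Fin n → Γ → ℕ
  | 0, i, j, γ => if i = j ∧ γ = 1 then 1 else 0
  | N + 1, i, j, γ => ∑ l, A i l * W A t N l j (γ * (t l)⁻¹)

/-- Total weight of the walks of length `N` from `i` to `j`. -/
def a (A : Fin n → Fin n → ℕ) (t : Fin n → Γ) (N : ℕ) (i j : Fin n) : ℕ := ∑ γ, W A t N i j γ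

variable (A : Fin n → Fin n → ℕ) (t : Fin n → Γ)

theorem W_add (M N : ℕ) (i j : Fin n) (γ : Γ) :
    W A t (M + N) i j γ = ∑ l, ∑ h, W A t M i l h * W A t N l j (γ * h⁻¹) := by
  induction M generalizing i γ with
  | zero =>
    simp only [Nat.zero_add, W]
    rw [Finset.sum_eq_single i, Finset.sum_eq_single 1]
    · simp
    · intro b _ hb; simp [hb]
    · simp
    · intro b _ hb; simp [Ne.symm hb]
    · simp
  | succ M ih =>
    rw [show M + 1 + N = (M + N) + 1 by ring]
    simp only [W, ih, Finset.mul_sum, Finset.sum_mul]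
    rw [Finset.sum_comm]
    refine Finset.sum_congr rfl fun l _ => ?_
    rw [Finset.sum_comm' (t' := Finset.univ) (s' := fun _ => Finset.univ) (by simp)]
    rw [Finset.sum_comm]
    conv_rhs => rw [Finset.sum_comm]
    refine Finset.sum_congr rfl fun x _ => ?_
    refine Fintype.sum_equiv (Equiv.mulRight (t x)) _ _ fun h => ?_
    simp [mul_assoc]

theorem a_zero (i j : Fin n) : a A t 0 i j = if i = j then 1 else 0 := by
  unfold a W
  by_cases h : i = j <;> simp [h]

theorem a_add (M N : ℕ) (i j : Fin n) :
    a A t (M + N) i j = ∑ l, a A t M i l * a A t N l j := by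
  unfold a
  simp only [W_add]
  rw [Finset.sum_comm]
  refine Finset.sum_congr rfl fun l _ => ?_
  rw [Finset.sum_comm, Finset.sum_mul]
  refine Finset.sum_congr rfl fun h _ => ?_
  rw [← Finset.mul_sum]
  congr 1
  exact Fintype.sum_equiv (Equiv.mulRight h⁻¹) _ _ fun h => by simp

theorem W_one (i j : Fin n) (γ : Γ) : W A t 1 i j γ = if γ = t j then A i j else 0 := by
  simp only [W]
  rw [Finset.sum_eq_single j]
  · simp [mul_inv_eq_one]
  · intro b _ hb; simp [hb]
  · simp

theorem a_one (i j : Fin n) : a A t 1 i j = A i j := by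
  simp [a, W_one]

theorem a_eq_pow (N : ℕ) (i j : Fin n) : a A t N i j = ((Matrix.of A) ^ N) i j := by
  induction N generalizing i with
  | zero => simp [a_zero, Matrix.one_apply]
  | succ N ih =>
    rw [add_comm, a_add, pow_add, pow_one, Matrix.mul_apply]
    simp [a_one, ih]

theorem a_symm (hsymm : ∀ i j, A i j = A j i) (N : ℕ) (i j : Fin n) :
    a A t N i j = a A t N j i := by
  rw [a_eq_pow, a_eq_pow]
  have h : (Matrix.of A).transpose = Matrix.of A := by
    ext x y; simp [hsymm x y]
  have : ((Matrix.of A) ^ N).transpose = (Matrix.of A) ^ N := by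
    rw [Matrix.transpose_pow, h]
  conv_lhs => rw [← this]
  rfl

theorem exists_of_a_pos {N : ℕ} {i j : Fin n} (h : 0 < a A t N i j) :
    ∃ γ, 0 < W A t N i j γ := by
  by_contra hc
  push Not at hc
  have : a A t N i j = 0 := Finset.sum_eq_zero fun γ _ => by simpa using hc γ
  omega

theorem a_pos_of_W {N : ℕ} {i j : Fin n} {γ : Γ} (h : 0 < W A t N i j γ) :
    0 < a A t N i j :=
  lt_of_lt_of_le h (Finset.single_le_sum (f := fun γ => W A t N i j γ)
    (fun _ _ => Nat.zero_le _) (Finset.mem_univ γ))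

theorem a_add_pos {M N : ℕ} {i j : Fin n} (h : 0 < a A t (M + N) i j) :
    ∃ l, 0 < a A t M i l ∧ 0 < a A t N l j := by
  rw [a_add] at h
  obtain ⟨l, -, hl⟩ := Finset.exists_ne_zero_of_sum_ne_zero h.ne'
  exact ⟨l, Nat.pos_of_ne_zero (left_ne_zero_of_mul hl),
    Nat.pos_of_ne_zero (right_ne_zero_of_mul hl)⟩

theorem W_comp {M N : ℕ} {i l j : Fin n} {p q : Γ} (h1 : 0 < W A t M i l p)
    (h2 : 0 < W A t N l j q) : 0 < W A t (M + N) i j (q * p) := by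
  rw [W_add]
  refine Finset.sum_pos' (fun _ _ => Nat.zero_le _) ⟨l, Finset.mem_univ _, ?_⟩
  refine Finset.sum_pos' (fun _ _ => Nat.zero_le _) ⟨p, Finset.mem_univ _, ?_⟩
  simpa using ⟨h1, h2⟩

theorem W_id (i : Fin n) : 0 < W A t 0 i i 1 := by simp [W]

theorem W_pow {M : ℕ} {i : Fin n} {p : Γ} (h : 0 < W A t M i i p) (r : ℕ) :
    0 < W A t (r * M) i i (p ^ r) := by
  induction r with
  | zero => simpa using W_id A t i
  | succ r ih =>
    rw [pow_succ', Nat.succ_mul]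
    exact W_comp A t ih h

/-- Existence of a walk with length in a given residue class. -/
def F (L : ℕ) (s : ZMod L) (i j : Fin n) (p : Γ) : Prop :=
  ∃ m : ℕ, (m : ZMod L) = s ∧ 0 < W A t m i j p

theorem F_id (L : ℕ) (i : Fin n) : F A t L 0 i i 1 := ⟨0, by simp, W_id A t i⟩

variable {A t}

theorem F_comp {L : ℕ} {s s' : ZMod L} {i l j : Fin n} {p q : Γ} (h1 : F A t L s i l p)
    (h2 : F A t L s' l j q) : F A t L (s + s') i j (q * p) := by
  obtain ⟨m, rfl, h1⟩ := h1
  obtain ⟨m', rfl, h2⟩ := h2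
  exact ⟨m + m', by simp, W_comp A t h1 h2⟩

theorem F_inv (hsymm : ∀ i j, A i j = A j i) {L : ℕ} (hL : 1 ≤ L) {s : ZMod L} {i j : Fin n}
    {p : Γ} (h : F A t L s i j p) : F A t L (-s) j i p⁻¹ := by
  obtain ⟨m, rfl, h⟩ := h
  obtain ⟨q, hq⟩ := exists_of_a_pos A t (a_symm A t hsymm m i j ▸ a_pos_of_W A t h)
  have hloop := W_comp A t h hq
  have he : 1 ≤ Fintype.card Γ * L := Nat.mul_pos Fintype.card_pos hL
  obtain ⟨r, hr⟩ : ∃ r, Fintype.card Γ * L = r + 1 := ⟨_, (Nat.sub_add_cancel he).symm⟩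
  have h3 := W_comp A t hq (W_pow A t hloop r)
  refine ⟨m + r * (m + m), ?_, ?_⟩
  · have : ((Fintype.card Γ * L : ℕ) : ZMod L) = ((r + 1 : ℕ) : ZMod L) := by rw [hr]
    push_cast at this ⊢
    simp only [CharP.cast_eq_zero, mul_zero] at this
    have hr' : (r : ZMod L) = -1 := by linear_combination -this
    rw [hr']; ring
  · have e1 : (q * p) ^ r * (q * p) = 1 := by
      rw [← pow_succ, ← hr, pow_mul, pow_card_eq_one, one_pow]
    have : (q * p) ^ r * q = p⁻¹ := by
      rw [eq_inv_iff_mul_eq_one, mul_assoc, e1]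
    rwa [this] at h3

theorem F_step {L : ℕ} {i j : Fin n} (h : 0 < A i j) : F A t L 1 i j (t j) :=
  ⟨1, by simp, by simpa [W_one] using h⟩

theorem F_even (hsymm : ∀ i j, A i j = A j i) {L : ℕ} (hL : 1 ≤ L) (s : ℕ) (i j : Fin n)
    (h : 0 < a A t (2 * s) i j) : F A t L 0 i j 1 := by
  induction s generalizing i with
  | zero =>
    simp only [Nat.mul_zero, a_zero] at h
    have : i = j := by by_contra hc; simp [hc] at h
    subst this
    exact F_id A t L i
  | succ s ih =>
    rw [show 2 * (s + 1) = (1 + 1) + 2 * s by ring] at h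
    obtain ⟨l, h1, h2⟩ := a_add_pos A t h
    obtain ⟨x, h3, h4⟩ := a_add_pos A t h1
    rw [a_one] at h3 h4
    rw [hsymm] at h4
    have := F_comp (F_comp (F_step (t := t) (L := L) h3) (F_inv hsymm hL (F_step h4))) (ih l h2)
    simpa using this

theorem F_all (hsymm : ∀ i j, A i j = A j i) {k : ℕ} (hk : 1 ≤ k)
    (hpos : ∀ i j, 0 < a A t k i j)
    (hgen : Subgroup.closure (Set.range t) = ⊤)
    (hrho : ∀ ρ : Γ →* ℂˣ, (∃ γ, ρ γ ≠ 1) → ∃ i j, ρ (t i) ≠ ρ (t j))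
    {L : ℕ} (hL : 1 ≤ L) (i j : Fin n) (p : Γ) : F A t L 0 i j p := by
  have h0 : ∀ i j, F A t L 0 i j 1 := by
    intro i j
    refine F_even hsymm hL k i j ?_
    rw [two_mul, a_add]
    exact Finset.sum_pos (fun l _ => Nat.mul_pos (hpos _ _) (hpos _ _)) ⟨i, Finset.mem_univ _⟩
  have h1 : ∀ i j x, F A t L 1 i j (t x) := by
    intro i j x
    have hx := hpos x x
    rw [show k = 1 + (k - 1) by omega] at hx
    obtain ⟨y, hy, -⟩ := a_add_pos A t hx
    rw [a_one, hsymm] at hy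
    have := F_comp (F_comp (h0 i y) (F_step (t := t) hy)) (h0 x j)
    simpa using this
  have hall : ∀ x : Γ, ∃ s : ZMod L, ∀ i j, F A t L s i j x := by
    intro x
    have hx : x ∈ Subgroup.closure (Set.range t) := by rw [hgen]; trivial
    induction hx using Subgroup.closure_induction with
    | mem x hx => obtain ⟨y, rfl⟩ := hx; exact ⟨1, fun i j => h1 i j y⟩
    | one => exact ⟨0, h0⟩
    | mul x y _ _ hx hy =>
      obtain ⟨s, hs⟩ := hx
      obtain ⟨s', hs'⟩ := hy
      exact ⟨s' + s, fun i j => F_comp (hs' i i) (hs i j)⟩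
    | inv x _ hx =>
      obtain ⟨s, hs⟩ := hx
      exact ⟨-s, fun i j => F_inv hsymm hL (hs j i)⟩
  let K : Subgroup Γ :=
    { carrier := {x | ∀ i j, F A t L 0 i j x}
      one_mem' := h0
      mul_mem' := by
        intro x y hx hy i j
        simpa using F_comp (hy i i) (hx i j)
      inv_mem' := by
        intro x hx i j
        simpa using F_inv hsymm hL (hx j i) }
  have hK : ∀ x, x ∈ K ↔ ∀ i j, F A t L 0 i j x := fun x => Iff.rfl
  have hnormal : K.Normal := by
    constructor
    intro x hx g
    obtain ⟨s, hs⟩ := hall g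
    rw [hK] at hx ⊢
    intro i j
    have := F_comp (F_comp (F_inv hsymm hL (hs i i)) (hx i i)) (hs i j)
    simpa [mul_assoc] using this
  have hcomm : ∀ x y : Γ, (x * y)⁻¹ * (y * x) ∈ K := by
    intro x y
    obtain ⟨s, hs⟩ := hall x
    obtain ⟨s', hs'⟩ := hall y
    rw [hK]
    intro i j
    have := F_comp (F_comp (hs i i) (hs' i i)) (F_inv hsymm hL (F_comp (hs' j i) (hs i i)))
    rwa [show s + s' + -(s' + s) = 0 by ring] at this
  have htt : ∀ x y, (t x)⁻¹ * t y ∈ K := by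
    intro x y
    rw [hK]
    intro i j
    simpa using F_comp (h1 i i y) (F_inv hsymm hL (h1 j i x))
  suffices hp : p ∈ K from hp i j
  by_contra hp
  let _ : CommGroup (Γ ⧸ K) :=
    { (inferInstance : Group (Γ ⧸ K)) with
      mul_comm := by
        intro x y
        induction x using QuotientGroup.induction_on with | _ x
        induction y using QuotientGroup.induction_on with | _ y
        exact QuotientGroup.eq.2 (hcomm x y) }
  have hne : (QuotientGroup.mk' K p : Γ ⧸ K) ≠ 1 := by
    intro h
    exact hp ((QuotientGroup.eq_one_iff p).1 h)
  obtain ⟨φ, hφ⟩ := CommGroup.exists_apply_ne_one_of_hasEnoughRootsOfUnity (Γ ⧸ K) ℂ hne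
  obtain ⟨x, y, hxy⟩ := hrho (φ.comp (QuotientGroup.mk' K)) ⟨p, hφ⟩
  apply hxy
  simp only [MonoidHom.comp_apply]
  congr 1
  exact QuotientGroup.eq.2 (htt x y)

theorem exists_full (hsymm : ∀ i j, A i j = A j i) {k : ℕ} (hk : 1 ≤ k)
    (hpos : ∀ i j, 0 < a A t k i j)
    (hgen : Subgroup.closure (Set.range t) = ⊤)
    (hrho : ∀ ρ : Γ →* ℂˣ, (∃ γ, ρ γ ≠ 1) → ∃ i j, ρ (t i) ≠ ρ (t j)) :
    ∃ m, 1 ≤ m ∧ ∀ i j p, 0 < W A t m i j p := by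
  set L := Fintype.card Γ * k with hLdef
  have hL : 1 ≤ L := Nat.mul_pos Fintype.card_pos hk
  have hloop : ∀ i, 0 < W A t L i i 1 := by
    intro i
    obtain ⟨g, hg⟩ := exists_of_a_pos A t (hpos i i)
    simpa using W_pow A t hg (Fintype.card Γ)
  have hex : ∀ x : Fin n × Fin n × Γ, ∃ b : ℕ, 0 < W A t (b * L) x.1 x.2.1 x.2.2 := by
    intro x
    obtain ⟨m, hm, h⟩ := F_all hsymm hk hpos hgen hrho hL x.1 x.2.1 x.2.2
    rw [ZMod.natCast_eq_zero_iff] at hm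
    obtain ⟨b, rfl⟩ := hm
    exact ⟨b, by rwa [mul_comm]⟩
  choose b hb using hex
  refine ⟨(1 + ∑ x, b x) * L, Nat.mul_pos (by omega) hL, ?_⟩
  intro i j p
  have hle : b (i, j, p) ≤ 1 + ∑ x, b x :=
    le_trans (Finset.single_le_sum (f := b) (fun _ _ => Nat.zero_le _) (Finset.mem_univ _))
      (Nat.le_add_left _ _)
  obtain ⟨r, hr⟩ := Nat.exists_eq_add_of_le' hle
  rw [hr, add_mul]
  have := W_comp A t (W_pow A t (hloop i) r) (hb (i, j, p))
  simpa using this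

variable (A t)

theorem contract (m N : ℕ) (δ ε : ℝ)
    (hδ : ∀ i l h, δ * a A t m i l ≤ W A t m i l h)
    (hε : ∀ i j γ γ', |(W A t N i j γ : ℝ) - W A t N i j γ'| ≤ ε * a A t N i j)
    (i j : Fin n) (γ γ' : Γ) :
    |(W A t (m + N) i j γ : ℝ) - W A t (m + N) i j γ'| ≤
      ((1 - Fintype.card Γ * δ) * ε) * a A t (m + N) i j := by
  have hs : ∀ (l : Fin n) (g : Γ), ∑ h, (W A t N l j (g * h⁻¹) : ℝ) = a A t N l j := by
    intro l g
    unfold a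
    push_cast
    exact Fintype.sum_equiv ((Equiv.inv Γ).trans (Equiv.mulLeft g)) _ _ fun h => by simp
  have e1 : (W A t (m + N) i j γ : ℝ) - W A t (m + N) i j γ' =
      ∑ l, ∑ h, ((W A t m i l h : ℝ) - δ * a A t m i l) *
        ((W A t N l j (γ * h⁻¹) : ℝ) - W A t N l j (γ' * h⁻¹)) := by
    rw [W_add, W_add]
    push_cast
    rw [← Finset.sum_sub_distrib]
    refine Finset.sum_congr rfl fun l _ => ?_
    simp only [sub_mul, mul_sub, Finset.sum_sub_distrib, ← Finset.mul_sum, hs]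
    ring
  rw [e1]
  calc _ ≤ ∑ l, ∑ h, ((W A t m i l h : ℝ) - δ * a A t m i l) * (ε * a A t N l j) := by
        refine (Finset.abs_sum_le_sum_abs _ _).trans (Finset.sum_le_sum fun l _ => ?_)
        refine (Finset.abs_sum_le_sum_abs _ _).trans (Finset.sum_le_sum fun h _ => ?_)
        rw [abs_mul, abs_of_nonneg (sub_nonneg.2 (hδ i l h))]
        exact mul_le_mul_of_nonneg_left (hε _ _ _ _) (sub_nonneg.2 (hδ i l h))
    _ = _ := by
        rw [a_add]
        push_cast
        rw [Finset.mul_sum]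
        refine Finset.sum_congr rfl fun l _ => ?_
        rw [← Finset.sum_mul, Finset.sum_sub_distrib]
        have : ∑ h, (W A t m i l h : ℝ) = a A t m i l := by unfold a; push_cast; rfl
        rw [this]
        simp
        ring

theorem base (N : ℕ) (i j : Fin n) (γ γ' : Γ) :
    |(W A t N i j γ : ℝ) - W A t N i j γ'| ≤ 1 * a A t N i j := by
  have h : ∀ γ, (W A t N i j γ : ℝ) ≤ a A t N i j := fun γ => by
    exact_mod_cast Finset.single_le_sum (f := fun γ => W A t N i j γ)
      (fun _ _ => Nat.zero_le _) (Finset.mem_univ γ)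
  rw [abs_le]
  constructor <;> linarith [h γ, h γ', Nat.cast_nonneg (α := ℝ) (W A t N i j γ),
    Nat.cast_nonneg (α := ℝ) (W A t N i j γ')]

theorem iterate (m : ℕ) (δ : ℝ) (hδ : ∀ i l h, δ * a A t m i l ≤ W A t m i l h)
    (q r : ℕ) : ∀ (i j : Fin n) (γ γ' : Γ),
    |(W A t (m * q + r) i j γ : ℝ) - W A t (m * q + r) i j γ'| ≤
      ((1 - Fintype.card Γ * δ) ^ q) * a A t (m * q + r) i j := by
  induction q with
  | zero => intro i j γ γ'; simpa using base A t r i j γ γ'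
  | succ q ih =>
    intro i j γ γ'
    rw [show m * (q + 1) + r = m + (m * q + r) by ring, pow_succ']
    exact contract A t m _ δ _ hδ ih i j γ γ'

theorem sum_cons {M : Type*} [AddCommMonoid M] (N : ℕ) (f : (Fin (N + 1) → Fin n) → M) :
    ∑ w, f w = ∑ i, ∑ w' : Fin N → Fin n, f (Fin.cons i w') := by
  rw [← Fintype.sum_prod_type' (f := fun (i : Fin n) (w' : Fin N → Fin n) =>
    f (Fin.cons i w'))]
  exact (Fintype.sum_equiv (Fin.consEquiv fun _ => Fin n) _ _ fun x => rfl).symm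

theorem walk_sum (N : ℕ) (i : Fin n) (γ : Γ) :
    (∑ w' : Fin N → Fin n,
      if (List.ofFn fun j => t ((Fin.cons i w' : Fin (N + 1) → Fin n) j)).reverse.prod = γ then
        ∏ j : Fin N, A ((Fin.cons i w' : Fin (N + 1) → Fin n) j.castSucc)
          ((Fin.cons i w' : Fin (N + 1) → Fin n) j.succ) else 0) =
    ∑ j, W A t N i j (γ * (t i)⁻¹) := by
  induction N generalizing i γ with
  | zero =>
    simp [W, mul_inv_eq_one, ite_and, eq_comm]
  | succ N ih =>
    rw [sum_cons]
    simp only [W]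
    conv_rhs => rw [Finset.sum_comm]
    refine Finset.sum_congr rfl fun l _ => ?_
    rw [← Finset.mul_sum, ← ih, Finset.mul_sum]
    refine Finset.sum_congr rfl fun w _ => ?_
    rw [List.ofFn_succ, Fin.prod_univ_succ]
    simp only [Fin.cons_zero, Fin.cons_succ, List.reverse_cons, List.prod_append,
      List.prod_singleton, ← Fin.succ_castSucc, Fin.castSucc_zero, mul_ite, mul_zero,
      eq_mul_inv_iff_mul_eq]

theorem num_eq (N : ℕ) (γ : Γ) :
    (∑ w ∈ Finset.univ.filter
              (fun w : Fin (N + 1) → Fin n =>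
                (List.ofFn fun j => t (w j)).reverse.prod = γ),
            ((∏ j : Fin N, A (w j.castSucc) (w j.succ) : ℕ) : ℝ)) =
    ∑ i, ∑ j, (W A t N i j (γ * (t i)⁻¹) : ℝ) := by
  rw [Finset.sum_filter, sum_cons]
  refine Finset.sum_congr rfl fun i _ => ?_
  have := walk_sum A t N i γ
  exact_mod_cast this

theorem den_eq (N : ℕ) :
    (∑ w : Fin (N + 1) → Fin n,
            ((∏ j : Fin N, A (w j.castSucc) (w j.succ) : ℕ) : ℝ)) =
    ∑ i, ∑ j, (a A t N i j : ℝ) := by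
  have h1 := Finset.sum_fiberwise (M := ℝ) (s := Finset.univ)
    (g := fun w : Fin (N + 1) → Fin n => (List.ofFn fun j => t (w j)).reverse.prod)
    (f := fun w => ((∏ j : Fin N, A (w j.castSucc) (w j.succ) : ℕ) : ℝ))
  rw [← h1]
  simp only [num_eq]
  rw [Finset.sum_comm]
  refine Finset.sum_congr rfl fun i _ => ?_
  rw [Finset.sum_comm]
  refine Finset.sum_congr rfl fun j _ => ?_
  unfold a
  push_cast
  exact Fintype.sum_equiv (Equiv.mulRight (t i)⁻¹) _ _ fun h => by simp

end WalkAux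

open WalkAux in

/-- equidistribution of walk products over a finite group,
with exponential speed of convergence. -/
theorem stmt0 {Γ : Type*} [Group Γ] [Fintype Γ] [DecidableEq Γ]
    (n : ℕ) (hn : 1 ≤ n) (A : Fin n → Fin n → ℕ) (t : Fin n → Γ)
    (hsymm : ∀ i j, A i j = A j i)
    (hprim : ∃ k, 1 ≤ k ∧ ∀ i j, 0 < ((Matrix.of A) ^ k) i j)
    (hgen : Subgroup.closure (Set.range t) = ⊤)
    (hrho : ∀ ρ : Γ →* ℂˣ, (∃ γ, ρ γ ≠ 1) → ∃ i j, ρ (t i) ≠ ρ (t j)) :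
    ∃ C : ℝ, 0 < C ∧ ∃ c : ℝ, 0 < c ∧ c < 1 ∧
      ∀ N, 1 ≤ N → ∀ γ : Γ,
        |(∑ w ∈ Finset.univ.filter
              (fun w : Fin (N + 1) → Fin n =>
                (List.ofFn fun j => t (w j)).reverse.prod = γ),
            ((∏ j : Fin N, A (w j.castSucc) (w j.succ) : ℕ) : ℝ)) /
          (∑ w : Fin (N + 1) → Fin n,
            ((∏ j : Fin N, A (w j.castSucc) (w j.succ) : ℕ) : ℝ))
          - 1 / (Fintype.card Γ : ℝ)| ≤ C * c ^ N := by
  obtain ⟨k, hk, hpos'⟩ := hprim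
  have hpos : ∀ i j, 0 < a A t k i j := fun i j => by rw [a_eq_pow]; exact hpos' i j
  obtain ⟨m, hm, hW⟩ := exists_full hsymm hk hpos hgen hrho
  have he : (0 : ℝ) < Fintype.card Γ := by exact_mod_cast Fintype.card_pos
  set e : ℝ := ((Fintype.card Γ : ℕ) : ℝ) with hedef
  set X : ℝ := 1 + ∑ i, ∑ j, (a A t m i j : ℝ) with hX
  have hX1 : 1 ≤ X := by
    have : 0 ≤ ∑ i, ∑ j, (a A t m i j : ℝ) := by positivity
    linarith
  have haX : ∀ i j, (a A t m i j : ℝ) ≤ X := by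
    intro i j
    have h1 : (a A t m i j : ℝ) ≤ ∑ j, (a A t m i j : ℝ) :=
      Finset.single_le_sum (f := fun j => (a A t m i j : ℝ)) (fun _ _ => by positivity)
        (Finset.mem_univ j)
    have h2 : ∑ j, (a A t m i j : ℝ) ≤ ∑ i, ∑ j, (a A t m i j : ℝ) :=
      Finset.single_le_sum (f := fun i => ∑ j, (a A t m i j : ℝ)) (fun _ _ => by positivity)
        (Finset.mem_univ i)
    linarith
  have he1 : (1 : ℝ) ≤ e := by rw [hedef]; exact_mod_cast (Fintype.card_pos : 0 < Fintype.card Γ)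
  set δ : ℝ := 1 / (2 * e * X) with hδdef
  have hδ : ∀ i l h, δ * a A t m i l ≤ W A t m i l h := by
    intro i l h
    have h1 : (1 : ℝ) ≤ W A t m i l h := by exact_mod_cast hW i l h
    refine le_trans ?_ h1
    rw [hδdef, one_div, inv_mul_le_iff₀ (by positivity)]
    nlinarith [haX i l]
  set θ : ℝ := 1 - e * δ with hθ
  have heδ : e * δ = 1 / (2 * X) := by rw [hδdef]; field_simp
  have hθ1 : θ < 1 := by
    have : 0 < 1 / (2 * X) := by positivity
    linarith
  have hθ0 : 0 < θ := by
    have : 1 / (2 * X) < 1 := by rw [div_lt_one (by positivity)]; linarith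
    linarith
  have hm0 : m ≠ 0 := by omega
  set c : ℝ := θ ^ ((m : ℝ)⁻¹) with hc
  have hc0 : 0 < c := Real.rpow_pos_of_pos hθ0 _
  have hc1 : c < 1 := Real.rpow_lt_one hθ0.le hθ1 (by positivity)
  have hcm : c ^ m = θ := Real.rpow_inv_natCast_pow hθ0.le hm0
  refine ⟨θ⁻¹, by positivity, c, hc0, hc1, ?_⟩
  intro N hN γ
  have hbound : θ ^ (N / m) ≤ θ⁻¹ * c ^ N := by
    have hN' : c ^ N = θ ^ (N / m) * c ^ (N % m) := by
      conv_lhs => rw [← Nat.div_add_mod N m, pow_add, pow_mul, hcm]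
    have : θ ≤ c ^ (N % m) := by
      rw [← hcm]
      exact pow_le_pow_of_le_one hc0.le hc1.le (Nat.mod_lt _ (by omega)).le
    rw [hN', ← div_eq_inv_mul, le_div_iff₀ hθ0]
    exact mul_le_mul_of_nonneg_left this (by positivity)
  have hit : ∀ (i j : Fin n) (γ γ' : Γ),
      |(W A t N i j γ : ℝ) - W A t N i j γ'| ≤ θ ^ (N / m) * a A t N i j := by
    have := iterate A t m δ hδ (N / m) (N % m)
    rwa [Nat.div_add_mod] at this
  have hden : 0 < ∑ i, ∑ j, (a A t N i j : ℝ) := by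
    have h0 : ∀ s, 1 ≤ s → ∀ i j, 0 < a A t (k * s) i j := by
      intro s hs
      induction s, hs using Nat.le_induction with
      | base => simpa using hpos
      | succ s hs ih =>
        intro i j
        rw [Nat.mul_succ, a_add]
        exact Finset.sum_pos (fun l _ => Nat.mul_pos (ih _ _) (hpos _ _)) ⟨i, Finset.mem_univ _⟩
    have hi : Fin n := ⟨0, by omega⟩
    have h1 := h0 N hN hi hi
    rw [← Nat.add_sub_cancel' (Nat.le_mul_of_pos_left N hk)] at h1
    obtain ⟨l, hl, -⟩ := a_add_pos A t h1
    refine Finset.sum_pos' (fun _ _ => by positivity) ⟨hi, Finset.mem_univ _, ?_⟩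
    exact Finset.sum_pos' (fun _ _ => by positivity) ⟨l, Finset.mem_univ _, by exact_mod_cast hl⟩
  rw [num_eq, den_eq A t]
  set D := ∑ i, ∑ j, (a A t N i j : ℝ) with hD
  have key : |(∑ i, ∑ j, (W A t N i j (γ * (t i)⁻¹) : ℝ)) - D / e| ≤ θ ^ (N / m) * D := by
    have e1 : (∑ i, ∑ j, (W A t N i j (γ * (t i)⁻¹) : ℝ)) - D / e =
        ∑ i, ∑ j, ((W A t N i j (γ * (t i)⁻¹) : ℝ) - a A t N i j / e) := by
      simp only [Finset.sum_sub_distrib, hD, Finset.sum_div]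
    rw [e1, hD, Finset.mul_sum]
    refine (Finset.abs_sum_le_sum_abs _ _).trans (Finset.sum_le_sum fun i _ => ?_)
    rw [Finset.mul_sum]
    refine (Finset.abs_sum_le_sum_abs _ _).trans (Finset.sum_le_sum fun j _ => ?_)
    have e2 : (W A t N i j (γ * (t i)⁻¹) : ℝ) - a A t N i j / e =
        (∑ γ', ((W A t N i j (γ * (t i)⁻¹) : ℝ) - W A t N i j γ')) / e := by
      rw [Finset.sum_sub_distrib]
      have : ∑ h, (W A t N i j h : ℝ) = a A t N i j := by unfold a; push_cast; rfl
      rw [this, Finset.sum_const, Finset.card_univ, nsmul_eq_mul, ← hedef]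
      field_simp
    rw [e2, abs_div, abs_of_pos he, div_le_iff₀ he]
    refine (Finset.abs_sum_le_sum_abs _ _).trans ?_
    refine (Finset.sum_le_sum fun γ' _ => hit i j _ γ').trans ?_
    rw [Finset.sum_const, Finset.card_univ, nsmul_eq_mul, ← hedef, mul_comm]
  refine le_trans ?_ hbound
  generalize (∑ i, ∑ j, (W A t N i j (γ * (t i)⁻¹) : ℝ)) = S at key ⊢
  have e3 : S / D - 1 / e = (S - D / e) / D := by field_simp
  rw [e3, abs_div, abs_of_pos hden, div_le_iff₀ hden]
  exact key
end

section
/- Let Γ be a finite group and consider a walk setup on Γ (symmetric primitive adjacency matrix A : Fin n → Fin n → ℕ with vertex labels t : Fin n → Γ) such that the set {t i : i : Fin n} generates Γ, and such that for every group homomorphism ρ : Γ →* ℂˣ with ρ not identically 1 there exist indices i, j with ρ (t i) ≠ ρ (t j). Fix two vertices i₀, j₀ : Fin n, and for γ ∈ Γ let P_{N,i₀,j₀}(γ) be (sum of the weights of walks w of length N with w 0 = i₀, w N = j₀ and γ_w = γ) / (sum of the weights of all walks of length N with w 0 = i₀ and w N = j₀). Then there exist N₀, a constant C > 0 and c with 0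 < c < 1 such that for every N ≥ N₀: the total weight of walks of length N from i₀ to j₀ is positive, and for every γ ∈ Γ, |P_{N,i₀,j₀}(γ) − 1/|Γ|| ≤ C · c^N. -/
open scoped BigOperators

/-- character-theoretic step: a subgroup containing all `(t i)⁻¹ * t j`, stable under
conjugation by the generators, is everything. -/
lemma aux_top {Γ : Type*} [Group Γ] [Fintype Γ]
    (n : ℕ) (t : Fin n → Γ)
    (hgen : Subgroup.closure (Set.range t) = ⊤)
    (hrho : ∀ ρ : Γ →* ℂˣ, (∃ γ, ρ γ ≠ 1) → ∃ i j, ρ (t i) ≠ ρ (t j))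
    (i₀ : Fin n) (D : Subgroup Γ) (hD : ∀ i j, (t i)⁻¹ * t j ∈ D)
    (hconj : ∀ j, ∀ g ∈ D, (t j)⁻¹ * g * t j ∈ D) : D = ⊤ := by
  have key : ∀ γ : Γ, ∀ g ∈ D, γ⁻¹ * g * γ ∈ D := by
    intro γ
    have hγ : γ ∈ Subgroup.closure (Set.range t) := by rw [hgen]; trivial
    induction hγ using Subgroup.closure_induction with
    | mem x hx => obtain ⟨j, rfl⟩ := hx; exact hconj j
    | one => intro g hg; simpa using hg
    | mul x y _ _ hx hy =>
      intro g hg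
      have := hy _ (hx g hg)
      simpa [mul_assoc] using this
    | inv x _ hx =>
      have hpow : ∀ m : ℕ, ∀ g ∈ D, (x ^ m)⁻¹ * g * x ^ m ∈ D := by
        intro m
        induction m with
        | zero => intro g hg; simpa using hg
        | succ m ih =>
          intro g hg
          have := hx _ (ih g hg)
          simpa [pow_succ, mul_assoc] using this
      have hx' : x⁻¹ = x ^ (orderOf x - 1) := by
        have h0 := orderOf_pos x
        rw [inv_eq_iff_mul_eq_one, ← pow_succ', Nat.sub_add_cancel h0, pow_orderOf_eq_one]
      rw [hx']
      exact hpow _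
  have : D.Normal := ⟨fun g hg γ => by simpa using key γ⁻¹ g hg⟩
  by_contra hne
  have hcyc : IsCyclic (Γ ⧸ D) := by
    refine ⟨⟨(t i₀ : Γ ⧸ D), ?_⟩⟩
    have hle : Subgroup.closure (Set.range t) ≤
        (Subgroup.zpowers ((t i₀ : Γ) : Γ ⧸ D)).comap (QuotientGroup.mk' D) := by
      rw [Subgroup.closure_le]
      rintro _ ⟨j, rfl⟩
      have : ((t j : Γ) : Γ ⧸ D) = (t i₀ : Γ) := (QuotientGroup.eq.2 (hD j i₀))
      simp [this]
    intro q
    obtain ⟨g, rfl⟩ := QuotientGroup.mk_surjective q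
    have : g ∈ Subgroup.closure (Set.range t) := by rw [hgen]; trivial
    exact hle this
  let _ : CommGroup (Γ ⧸ D) := IsCyclic.commGroup
  obtain ⟨g, hg⟩ : ∃ g, g ∉ D := by
    by_contra! h
    exact hne ((Subgroup.eq_top_iff' D).2 h)
  have hg1 : (g : Γ ⧸ D) ≠ 1 := by
    rwa [Ne, QuotientGroup.eq_one_iff]
  have : NeZero (Monoid.exponent (Γ ⧸ D)) := ⟨Monoid.exponent_ne_zero_of_finite⟩
  obtain ⟨φ, hφ⟩ := CommGroup.exists_apply_ne_one_of_hasEnoughRootsOfUnity (Γ ⧸ D) ℂ hg1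
  obtain ⟨i, j, hij⟩ := hrho (φ.comp (QuotientGroup.mk' D)) ⟨g, hφ⟩
  apply hij
  have : ((t i : Γ) : Γ ⧸ D) = (t j : Γ) := (QuotientGroup.eq.2 (hD i j))
  simp [this]

/-- growth step -/
lemma aux_growth {Γ : Type*} [Group Γ] [Fintype Γ] [DecidableEq Γ]
    (n : ℕ) (A : Fin n → Fin n → ℕ) (t : Fin n → Γ)
    (hsymm : ∀ i j, A i j = A j i)
    (hprim : ∃ k, 1 ≤ k ∧ ∀ i j, 0 < ((Matrix.of A) ^ k) i j)
    (hgen : Subgroup.closure (Set.range t) = ⊤)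
    (hrho : ∀ ρ : Γ →* ℂˣ, (∃ γ, ρ γ ≠ 1) → ∃ i j, ρ (t i) ≠ ρ (t j))
    (i₀ : Fin n) (S : ℕ → Fin n → Finset Γ) (hS0 : (S 0 i₀).Nonempty)
    (hstep : ∀ N i j, 0 < A i j → ∀ g ∈ S N i, t j * g ∈ S (N + 1) j) :
    ∃ N₂, ∀ N, N₂ ≤ N → ∀ i g, g ∈ S N i := by
  obtain ⟨k, hk1, hk⟩ := hprim
  have hsub : ∀ N i j, 0 < A i j → (S N i).image (t j * ·) ⊆ S (N + 1) j := by
    intro N i j hij x hx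
    obtain ⟨g, hg, rfl⟩ := Finset.mem_image.1 hx
    exact hstep N i j hij g hg
  have hcimg : ∀ N i j, ((S N i).image (t j * ·)).card = (S N i).card := fun N i j =>
    Finset.card_image_of_injective _ (mul_right_injective (t j))
  have hc1 : ∀ N i j, 0 < A i j → (S N i).card ≤ (S (N + 1) j).card := by
    intro N i j hij
    rw [← hcimg N i j]
    exact Finset.card_le_card (hsub N i j hij)
  have hck : ∀ k N i j, 0 < ((Matrix.of A) ^ k) i j → (S N i).card ≤ (S (N + k) j).card := by
    intro k
    induction k with
    | zero =>
      intro N i j h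
      by_cases hij : i = j
      · subst hij; simp
      · simp [hij] at h
    | succ k ih =>
      intro N i j h
      rw [pow_succ, Matrix.mul_apply, Finset.sum_pos_iff] at h
      obtain ⟨l, -, hl⟩ := h
      exact (ih N i l (Nat.pos_of_mul_pos_right hl)).trans
        (hc1 (N + k) l j (Nat.pos_of_mul_pos_left hl))
  have hnb : ∀ j, ∃ i, 0 < A i j := by
    intro j
    have h := hk j j
    obtain ⟨k', rfl⟩ : ∃ k', k = k' + 1 := ⟨k - 1, by omega⟩
    rw [pow_succ, Matrix.mul_apply, Finset.sum_pos_iff] at h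
    obtain ⟨l, -, hl⟩ := h
    exact ⟨l, (Nat.pos_of_mul_pos_left hl)⟩
  -- maximal cardinality
  obtain ⟨m, ⟨⟨N₁, i₁⟩, hm⟩, hmax⟩ : ∃ m ∈ Set.range (fun p : ℕ × Fin n => (S p.1 p.2).card),
      ∀ m' ∈ Set.range (fun p : ℕ × Fin n => (S p.1 p.2).card), m' ≤ m := by
    have hb : BddAbove (Set.range (fun p : ℕ × Fin n => (S p.1 p.2).card)) :=
      ⟨Fintype.card Γ, by rintro _ ⟨p, rfl⟩; exact Finset.card_le_univ _⟩
    exact ⟨_, Nat.sSup_mem ⟨_, ⟨(0, i₀), rfl⟩⟩ hb, fun m' hm' => le_csSup hb hm'⟩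
  have hle : ∀ N i, (S N i).card ≤ m := fun N i => hmax _ ⟨(N, i), rfl⟩
  have hmpos : 0 < m := lt_of_lt_of_le hS0.card_pos (hle 0 i₀)
  have heq : ∀ N, N₁ + k ≤ N → ∀ i, (S N i).card = m := by
    intro N hN
    induction N, hN using Nat.le_induction with
    | base =>
      intro i
      refine le_antisymm (hle _ _) ?_
      rw [← hm]
      exact hck k N₁ i₁ i (hk _ _)
    | succ N hN ih =>
      intro j
      obtain ⟨i, hi⟩ := hnb j
      refine le_antisymm (hle _ _) ?_
      rw [← ih i]
      exact hc1 _ _ _ hi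
  have himg : ∀ N, N₁ + k ≤ N → ∀ i j, 0 < A i j → (S N i).image (t j * ·) = S (N + 1) j := by
    intro N hN i j hij
    refine Finset.eq_of_subset_of_card_le (hsub N i j hij) ?_
    rw [hcimg, heq N hN, heq (N + 1) (by omega)]
  have hpair : ∀ N, N₁ + k ≤ N → ∀ i j i', 0 < A i j → 0 < A j i' → S N i = S N i' := by
    intro N hN i j i' h1 h2
    rw [hsymm] at h2
    exact Finset.image_injective (mul_right_injective (t j))
      ((himg N hN i j h1).trans (himg N hN i' j h2).symm)
  have heven : ∀ N, N₁ + k ≤ N → ∀ p i i',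
      0 < ((Matrix.of A * Matrix.of A) ^ p) i i' → S N i = S N i' := by
    intro N hN p
    induction p with
    | zero =>
      intro i j h
      by_cases hij : i = j
      · subst hij; simp
      · simp [hij] at h
    | succ p ih =>
      intro i j h
      rw [pow_succ, Matrix.mul_apply, Finset.sum_pos_iff] at h
      obtain ⟨l, -, hl⟩ := h
      rw [ih i l (Nat.pos_of_mul_pos_right hl)]
      have h2 := Nat.pos_of_mul_pos_left hl
      rw [Matrix.mul_apply, Finset.sum_pos_iff] at h2
      obtain ⟨q, -, hq⟩ := h2
      exact hpair N hN l q j (Nat.pos_of_mul_pos_right hq) (Nat.pos_of_mul_pos_left hq)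
  have hall : ∀ N, N₁ + k ≤ N → ∀ i i', S N i = S N i' := by
    intro N hN i i'
    refine heven N hN k i i' ?_
    rw [← pow_two, ← pow_mul, mul_comm, pow_mul, pow_two, Matrix.mul_apply]
    exact Finset.sum_pos (fun l _ => Nat.mul_pos (hk _ _) (hk _ _)) ⟨i, Finset.mem_univ _⟩
  have hT : ∀ N, N₁ + k ≤ N → ∀ j h, t j * h ∈ S (N + 1) i₀ ↔ h ∈ S N i₀ := by
    intro N hN j h
    obtain ⟨i, hi⟩ := hnb j
    rw [hall (N + 1) (by omega) i₀ j, ← himg N hN i j hi, hall N hN i₀ i]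
    simp
  let D : Subgroup Γ :=
    { carrier := {g | ∀ N, N₁ + k ≤ N → ∀ h, g * h ∈ S N i₀ ↔ h ∈ S N i₀}
      one_mem' := by intro N _ h; simp
      mul_mem' := by
        intro a b ha hb N hN h
        rw [mul_assoc, ha N hN, hb N hN]
      inv_mem' := by
        intro a ha N hN h
        rw [← ha N hN]
        simp }
  have hD : D = ⊤ := by
    refine aux_top n t hgen hrho i₀ D ?_ ?_
    · intro i j N hN h
      rw [← hT N hN i, mul_assoc, mul_inv_cancel_left, hT N hN j]
    · intro j g hg N hN h
      rw [← hT N hN j, mul_assoc, mul_assoc, mul_inv_cancel_left, hg (N + 1) (by omega), hT N hN j]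
  refine ⟨N₁ + k, fun N hN i g => ?_⟩
  rw [hall N hN i i₀]
  have hne : (S N i₀).Nonempty := by
    rw [← Finset.card_pos, heq N hN]; exact hmpos
  obtain ⟨h, hh⟩ := hne
  have : g * h⁻¹ ∈ D := by rw [hD]; trivial
  have := (this N hN h).2 hh
  simpa using this

/-- the lifted matrix -/
def liftB {Γ : Type*} [Group Γ] [DecidableEq Γ] {n : ℕ} (A : Fin n → Fin n → ℕ) (t : Fin n → Γ) :
    Matrix (Fin n × Γ) (Fin n × Γ) ℕ :=
  Matrix.of fun x y => if y.2 = t y.1 * x.2 then A x.1 y.1 else 0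

lemma aux_pos {Γ : Type*} [Group Γ] [Fintype Γ] [DecidableEq Γ]
    (n : ℕ) (A : Fin n → Fin n → ℕ) (t : Fin n → Γ)
    (hsymm : ∀ i j, A i j = A j i)
    (hprim : ∃ k, 1 ≤ k ∧ ∀ i j, 0 < ((Matrix.of A) ^ k) i j)
    (hgen : Subgroup.closure (Set.range t) = ⊤)
    (hrho : ∀ ρ : Γ →* ℂˣ, (∃ γ, ρ γ ≠ 1) → ∃ i j, ρ (t i) ≠ ρ (t j)) :
    ∃ N₂, ∀ N, N₂ ≤ N → ∀ x y, 0 < ((liftB A t) ^ N) x y := by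
  have h1 : ∀ x : Fin n × Γ, ∃ N₂, ∀ N, N₂ ≤ N → ∀ y, 0 < ((liftB A t) ^ N) x y := by
    intro x
    obtain ⟨N₂, h⟩ := aux_growth n A t hsymm hprim hgen hrho x.1
      (fun N i => Finset.univ.filter fun g => 0 < ((liftB A t) ^ N) x (i, g))
      ⟨x.2, by simp⟩ (by
        intro N i j hij g hg
        simp only [Finset.mem_filter, Finset.mem_univ, true_and] at hg ⊢
        rw [pow_succ, Matrix.mul_apply, Finset.sum_pos_iff]
        refine ⟨(i, g), Finset.mem_univ _, Nat.mul_pos hg ?_⟩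
        simpa [liftB] using hij)
    refine ⟨N₂, fun N hN y => ?_⟩
    have := h N hN y.1 y.2
    simpa using this
  choose f hf using h1
  exact ⟨Finset.univ.sup f, fun N hN x => hf x N ((Finset.le_sup (Finset.mem_univ x)).trans hN)⟩

/-- walk sums as matrix powers -/
lemma aux_walk {Γ : Type*} [Group Γ] [Fintype Γ] [DecidableEq Γ]
    (n : ℕ) (A : Fin n → Fin n → ℕ) (t : Fin n → Γ) (i₀ : Fin n) (N : ℕ) :
    ∀ (j₀ : Fin n) (γ : Γ), ∑ w ∈ Finset.univ.filter
                (fun w : Fin (N + 1) → Fin n =>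
                  w 0 = i₀ ∧ w (Fin.last N) = j₀ ∧
                    (List.ofFn fun j => t (w j)).reverse.prod = γ),
              (∏ j : Fin N, A (w j.castSucc) (w j.succ) : ℕ)
      = ((liftB A t) ^ N) (i₀, t i₀) (j₀, γ) := by
  induction N with
  | zero =>
    intro j₀ γ
    rw [Finset.sum_filter, ← (Equiv.funUnique (Fin 1) (Fin n)).symm.sum_comp]
    simp [Matrix.one_apply, ite_and]
  | succ N ih =>
    intro j₀ γ
    rw [pow_succ, Matrix.mul_apply, Fintype.sum_prod_type]
    simp_rw [← ih]
    rw [Finset.sum_filter, ← (Fin.snocEquiv (fun _ : Fin (N + 2) => Fin n)).sum_comp,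
      Fintype.sum_prod_type]
    have hL : ∀ (k : Fin n) (w : Fin (N + 1) → Fin n),
        (List.ofFn fun j => t ((Fin.snoc w k : Fin (N + 2) → Fin n) j)).reverse.prod
          = t k * (List.ofFn fun j => t (w j)).reverse.prod := by
      intro k w
      rw [List.ofFn_succ']
      simp [List.concat_eq_append]
    have hP : ∀ (k : Fin n) (w : Fin (N + 1) → Fin n),
        (∏ j : Fin (N + 1), A ((Fin.snoc w k : Fin (N + 2) → Fin n) j.castSucc)
            ((Fin.snoc w k : Fin (N + 2) → Fin n) j.succ))
          = (∏ j : Fin N, A (w j.castSucc) (w j.succ)) * A (w (Fin.last N)) k := by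
      intro k w
      rw [Fin.prod_univ_castSucc]
      simp only [Fin.snoc_castSucc, ← Fin.castSucc_succ, Fin.succ_last, Fin.snoc_last]
    have h0 : ∀ (k : Fin n) (w : Fin (N + 1) → Fin n),
        (Fin.snoc w k : Fin (N + 2) → Fin n) 0 = w 0 := by
      intro k w
      rw [← Fin.castSucc_zero, Fin.snoc_castSucc]
    simp only [Fin.snocEquiv, Equiv.coe_fn_mk, hL, hP, h0, Fin.snoc_last]
    rw [Finset.sum_comm]
    simp only [Finset.sum_filter, Finset.sum_mul]
    have hcomm : ∀ F : Fin n → Γ → (Fin (N + 1) → Fin n) → ℕ,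
        ∑ i, ∑ g, ∑ w, F i g w = ∑ w, ∑ i, ∑ g, F i g w := by
      intro F
      rw [Finset.sum_comm]
      simp_rw [Finset.sum_comm (s := (Finset.univ : Finset (Fin n)))]
      rw [Finset.sum_comm]
    rw [hcomm]
    refine Finset.sum_congr rfl fun w _ => ?_
    by_cases hw0 : w 0 = i₀
    · simp only [hw0, true_and, ite_and, liftB, Matrix.of_apply, ite_mul, zero_mul,
        Finset.sum_ite_eq', Finset.mem_univ, if_true, mul_ite, mul_zero]
      rw [Finset.sum_eq_single (w (Fin.last N)),
        Finset.sum_eq_single ((List.ofFn fun j => t (w j)).reverse.prod)]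
      · simp only [if_true]
        simp only [eq_comm]
      · intro g _ hg
        simp only [if_neg hg.symm, ite_self]
      · simp
      · intro i _ hi
        simp [hi.symm]
      · simp
    · simp [hw0]

lemma aux_contr {X : Type*} [Fintype X] [DecidableEq X] (B : Matrix X X ℕ) (K : ℕ) (hK1 : 1 ≤ K)
    (hK : ∀ x y, 0 < (B ^ K) x y) (a w : ℕ → X → ℝ)
    (ha : ∀ N y, a (N + 1) y = ∑ x, a N x * (B x y : ℝ))
    (hw : ∀ N y, w (N + 1) y = ∑ x, w N x * (B x y : ℝ))
    (h0 : ∀ x, 0 ≤ a 0 x ∧ a 0 x ≤ w 0 x) :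
    ∃ C : ℝ, 0 < C ∧ ∃ c : ℝ, 0 < c ∧ c < 1 ∧ ∀ N, ∃ l u : ℝ, u - l ≤ C * c ^ N ∧
      ∀ x, l * w N x ≤ a N x ∧ a N x ≤ u * w N x := by
  have hpow : ∀ v : ℕ → X → ℝ, (∀ N y, v (N + 1) y = ∑ x, v N x * (B x y : ℝ)) →
      ∀ m N y, v (N + m) y = ∑ x, v N x * ((B ^ m) x y : ℝ) := by
    intro v hv m
    induction m with
    | zero => intro N y; simp [Matrix.one_apply]
    | succ m ih =>
      intro N y
      rw [← add_assoc, hv]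
      simp_rw [ih, Finset.sum_mul]
      rw [Finset.sum_comm]
      refine Finset.sum_congr rfl fun x _ => ?_
      rw [pow_succ, Matrix.mul_apply]
      push_cast
      rw [Finset.mul_sum]
      exact Finset.sum_congr rfl fun z _ => by ring
  have hw0 : ∀ N x, 0 ≤ w N x := by
    intro N
    induction N with
    | zero => intro x; exact (h0 x).1.trans (h0 x).2
    | succ N ih =>
      intro x; rw [hw]
      exact Finset.sum_nonneg fun z _ => mul_nonneg (ih z) (Nat.cast_nonneg _)
  -- preservation of bounds
  have hpres : ∀ l u N, (∀ x, l * w N x ≤ a N x ∧ a N x ≤ u * w N x) →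
      ∀ m x, l * w (N + m) x ≤ a (N + m) x ∧ a (N + m) x ≤ u * w (N + m) x := by
    intro l u N h m y
    rw [hpow a ha, hpow w hw, Finset.mul_sum, Finset.mul_sum]
    constructor
    · refine Finset.sum_le_sum fun x _ => ?_
      rw [← mul_assoc]
      exact mul_le_mul_of_nonneg_right (h x).1 (Nat.cast_nonneg _)
    · refine Finset.sum_le_sum fun x _ => ?_
      rw [← mul_assoc]
      exact mul_le_mul_of_nonneg_right (h x).2 (Nat.cast_nonneg _)
  obtain ⟨M, hM2, hM⟩ : ∃ M : ℝ, 2 ≤ M ∧ ∀ x y, ((B ^ K) x y : ℝ) ≤ M := by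
    refine ⟨2 + ∑ x, ∑ y, ((B ^ K) x y : ℝ), ?_, ?_⟩
    · have : 0 ≤ ∑ x, ∑ y, ((B ^ K) x y : ℝ) := by positivity
      linarith
    · intro x y
      have h1 : ((B ^ K) x y : ℝ) ≤ ∑ y, ((B ^ K) x y : ℝ) :=
        Finset.single_le_sum (f := fun y => ((B ^ K) x y : ℝ))
          (fun z _ => Nat.cast_nonneg _) (Finset.mem_univ y)
      have h2 : ∑ y, ((B ^ K) x y : ℝ) ≤ ∑ x, ∑ y, ((B ^ K) x y : ℝ) :=
        Finset.single_le_sum (f := fun x => ∑ y, ((B ^ K) x y : ℝ))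
          (fun z _ => by positivity) (Finset.mem_univ x)
      linarith
  have hMpos : 0 < M := by linarith
  have hQ1 : ∀ x y, (1 : ℝ) ≤ ((B ^ K) x y : ℝ) := fun x y => by exact_mod_cast hK x y
  set q : ℝ := 1 - 1 / M with hq
  have hMinv : 1 / M ≤ 1 / 2 := one_div_le_one_div_of_le (by norm_num) hM2
  have hMinv0 : 0 < 1 / M := by positivity
  have hq0 : 0 < q := by rw [hq]; linarith
  have hq1 : q < 1 := by rw [hq]; linarith
  have hstep : ∀ l u N, (∀ x, l * w N x ≤ a N x ∧ a N x ≤ u * w N x) →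
      ∃ l' u', (u' - l' = q * (u - l) ∨ u' - l' = 0) ∧
      ∀ x, l' * w (N + K) x ≤ a (N + K) x ∧ a (N + K) x ≤ u' * w (N + K) x := by
    intro l u N h
    by_cases hs : ∑ x, w N x = 0
    · have hz : ∀ x, w N x = 0 := fun x =>
        (Finset.sum_eq_zero_iff_of_nonneg (fun x _ => hw0 N x)).1 hs x (Finset.mem_univ x)
      refine ⟨0, 0, Or.inr (by simp), hpres 0 0 N ?_ K⟩
      intro x
      have := h x
      rw [hz x] at this ⊢
      simpa using this
    · set s := ∑ x, w N x with hsdef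
      have hspos : 0 < s := lt_of_le_of_ne (Finset.sum_nonneg fun x _ => hw0 N x) (Ne.symm hs)
      set σ := ∑ x, a N x with hσ
      have hσl : 0 ≤ σ - l * s := by
        rw [hσ, hsdef, Finset.mul_sum, ← Finset.sum_sub_distrib]
        exact Finset.sum_nonneg fun x _ => by linarith [(h x).1]
      have hσu : 0 ≤ u * s - σ := by
        rw [hσ, hsdef, Finset.mul_sum, ← Finset.sum_sub_distrib]
        exact Finset.sum_nonneg fun x _ => by linarith [(h x).2]
      have hwM : ∀ y, w (N + K) y ≤ M * s := by
        intro y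
        rw [hpow w hw, hsdef, Finset.mul_sum]
        refine Finset.sum_le_sum fun x _ => ?_
        rw [mul_comm]
        exact mul_le_mul_of_nonneg_right (hM x y) (hw0 N x)
      have hl : ∀ y, σ - l * s ≤ a (N + K) y - l * w (N + K) y := by
        intro y
        rw [hpow w hw, hpow a ha, hσ, hsdef, Finset.mul_sum, Finset.mul_sum,
          ← Finset.sum_sub_distrib, ← Finset.sum_sub_distrib]
        refine Finset.sum_le_sum fun x _ => ?_
        nlinarith [(h x).1, hQ1 x y]
      have hu : ∀ y, u * s - σ ≤ u * w (N + K) y - a (N + K) y := by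
        intro y
        rw [hpow w hw, hpow a ha, hσ, hsdef, Finset.mul_sum, Finset.mul_sum,
          ← Finset.sum_sub_distrib, ← Finset.sum_sub_distrib]
        refine Finset.sum_le_sum fun x _ => ?_
        nlinarith [(h x).2, hQ1 x y]
      have hMs : 0 < M * s := mul_pos hMpos hspos
      have hfrac : ∀ r : ℝ, 0 ≤ r → ∀ y, r / (M * s) * w (N + K) y ≤ r := by
        intro r hr y
        rw [div_mul_eq_mul_div, div_le_iff₀ hMs]
        exact mul_le_mul_of_nonneg_left (hwM y) hr
      refine ⟨l + (σ - l * s) / (M * s), u - (u * s - σ) / (M * s), Or.inl ?_, ?_⟩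
      · rw [hq]
        field_simp
        ring
      · intro y
        have h1 := hfrac _ hσl y
        have h2 := hfrac _ hσu y
        have h3 := hl y
        have h4 := hu y
        rw [add_mul, sub_mul]
        constructor <;> linarith
  have hiter : ∀ m : ℕ, ∃ l u : ℝ, u - l ≤ q ^ m ∧
      ∀ x, l * w (m * K) x ≤ a (m * K) x ∧ a (m * K) x ≤ u * w (m * K) x := by
    intro m
    induction m with
    | zero =>
      refine ⟨0, 1, by simp, fun x => ?_⟩
      simpa using h0 x
    | succ m ih =>
      obtain ⟨l, u, hd, h⟩ := ih
      obtain ⟨l', u', hd', h'⟩ := hstep l u _ h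
      refine ⟨l', u', ?_, by rw [Nat.succ_mul]; exact h'⟩
      rcases hd' with hd' | hd'
      · rw [hd', pow_succ, mul_comm]
        exact mul_le_mul_of_nonneg_right hd hq0.le
      · rw [hd']; positivity
  set c : ℝ := q ^ ((K : ℝ)⁻¹) with hc
  have hKpos : (0 : ℝ) < (K : ℝ)⁻¹ := by
    have : (0 : ℝ) < K := by exact_mod_cast hK1
    positivity
  have hc0 : 0 < c := Real.rpow_pos_of_pos hq0 _
  have hc1 : c < 1 := Real.rpow_lt_one hq0.le hq1 hKpos
  have hcK : c ^ K = q := Real.rpow_inv_natCast_pow hq0.le (by omega)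
  refine ⟨(c ^ K)⁻¹, by positivity, c, hc0, hc1, fun N => ?_⟩
  obtain ⟨l, u, hd, h⟩ := hiter (N / K)
  have hN : N / K * K + N % K = N := Nat.div_add_mod' N K
  refine ⟨l, u, hd.trans ?_, ?_⟩
  · have hlt : N % K < K := Nat.mod_lt _ hK1
    rw [inv_mul_eq_div, le_div_iff₀ (by positivity)]
    rw [← hcK, ← pow_mul, ← pow_add]
    refine pow_le_pow_of_le_one hc0.le hc1.le ?_
    nlinarith
  · have := hpres l u _ h (N % K)
    rwa [hN] at this

/-- equidistribution of products along walks between two fixed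
vertices, with exponential speed of convergence. -/
theorem stmt1 {Γ : Type*} [Group Γ] [Fintype Γ] [DecidableEq Γ]
    (n : ℕ) (hn : 1 ≤ n) (A : Fin n → Fin n → ℕ) (t : Fin n → Γ)
    (hsymm : ∀ i j, A i j = A j i)
    (hprim : ∃ k, 1 ≤ k ∧ ∀ i j, 0 < ((Matrix.of A) ^ k) i j)
    (hgen : Subgroup.closure (Set.range t) = ⊤)
    (hrho : ∀ ρ : Γ →* ℂˣ, (∃ γ, ρ γ ≠ 1) → ∃ i j, ρ (t i) ≠ ρ (t j))
    (i₀ j₀ : Fin n) :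
    ∃ N₀ : ℕ, ∃ C : ℝ, 0 < C ∧ ∃ c : ℝ, 0 < c ∧ c < 1 ∧
      ∀ N, N₀ ≤ N →
        (0 < ∑ w ∈ Finset.univ.filter
              (fun w : Fin (N + 1) → Fin n => w 0 = i₀ ∧ w (Fin.last N) = j₀),
            ((∏ j : Fin N, A (w j.castSucc) (w j.succ) : ℕ) : ℝ)) ∧
        ∀ γ : Γ,
          |(∑ w ∈ Finset.univ.filter
                (fun w : Fin (N + 1) → Fin n =>
                  w 0 = i₀ ∧ w (Fin.last N) = j₀ ∧
                    (List.ofFn fun j => t (w j)).reverse.prod = γ),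
              ((∏ j : Fin N, A (w j.castSucc) (w j.succ) : ℕ) : ℝ)) /
            (∑ w ∈ Finset.univ.filter
                (fun w : Fin (N + 1) → Fin n => w 0 = i₀ ∧ w (Fin.last N) = j₀),
              ((∏ j : Fin N, A (w j.castSucc) (w j.succ) : ℕ) : ℝ))
            - 1 / (Fintype.card Γ : ℝ)| ≤ C * c ^ N := by
  obtain ⟨N₂, hpos⟩ := aux_pos n A t hsymm hprim hgen hrho
  set B := liftB A t with hB
  let a : ℕ → Fin n × Γ → ℝ := fun N y => ((B ^ N) (i₀, t i₀) y : ℕ)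
  let w : ℕ → Fin n × Γ → ℝ := fun N y => (((Matrix.of A) ^ N) i₀ y.1 : ℕ)
  have ha : ∀ N y, a (N + 1) y = ∑ x, a N x * (B x y : ℝ) := by
    intro N y
    simp only [a]
    rw [pow_succ, Matrix.mul_apply]
    push_cast
    rfl
  have hw : ∀ N y, w (N + 1) y = ∑ x, w N x * (B x y : ℝ) := by
    rintro N ⟨j, h⟩
    simp only [w]
    rw [pow_succ, Matrix.mul_apply, Fintype.sum_prod_type]
    push_cast
    refine Finset.sum_congr rfl fun i _ => ?_
    rw [Finset.sum_eq_single ((t j)⁻¹ * h)]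
    · simp [hB, liftB]
    · intro g _ hg
      have : ¬ (h = t j * g) := by
        rintro rfl
        exact hg (by simp)
      simp [hB, liftB, this]
    · simp
  have h0 : ∀ x, 0 ≤ a 0 x ∧ a 0 x ≤ w 0 x := by
    rintro ⟨j, h⟩
    simp only [a, w]
    refine ⟨Nat.cast_nonneg _, Nat.cast_le.2 ?_⟩
    by_cases hj : i₀ = j
    · subst hj
      by_cases hh : t i₀ = h <;> simp [Matrix.one_apply, hh]
    · simp [Matrix.one_apply, hj]
  have hsum : ∀ N j, ∑ h, a N (j, h) = ((Matrix.of A) ^ N) i₀ j := by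
    intro N
    induction N with
    | zero =>
      intro j
      by_cases hj : i₀ = j
      · subst hj
        simp [a, Matrix.one_apply]
      · simp [a, Matrix.one_apply, hj]
    | succ N ih =>
      intro j
      simp_rw [ha, Fintype.sum_prod_type]
      rw [pow_succ, Matrix.mul_apply, Finset.sum_comm]
      push_cast
      refine Finset.sum_congr rfl fun i _ => ?_
      rw [Finset.sum_comm, ← ih, Finset.sum_mul]
      refine Finset.sum_congr rfl fun g _ => ?_
      rw [← Finset.mul_sum]
      simp [hB, liftB]
  obtain ⟨C, hC, c, hc0, hc1, hcon⟩ := aux_contr B (N₂ + 1) (by omega)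
    (hpos (N₂ + 1) (by omega)) a w ha hw h0
  refine ⟨N₂, C, hC, c, hc0, hc1, fun N hN => ?_⟩
  have hnum : ∀ γ : Γ, (∑ w ∈ Finset.univ.filter
                (fun w : Fin (N + 1) → Fin n =>
                  w 0 = i₀ ∧ w (Fin.last N) = j₀ ∧
                    (List.ofFn fun j => t (w j)).reverse.prod = γ),
              ((∏ j : Fin N, A (w j.castSucc) (w j.succ) : ℕ) : ℝ)) = a N (j₀, γ) := by
    intro γ
    rw [← Nat.cast_sum, aux_walk]
  have hden : (∑ w ∈ Finset.univ.filter
                (fun w : Fin (N + 1) → Fin n => w 0 = i₀ ∧ w (Fin.last N) = j₀),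
              ((∏ j : Fin N, A (w j.castSucc) (w j.succ) : ℕ) : ℝ)) = ∑ γ, a N (j₀, γ) := by
    rw [← Finset.sum_fiberwise _
      (fun w : Fin (N + 1) → Fin n => (List.ofFn fun j => t (w j)).reverse.prod)]
    refine Finset.sum_congr rfl fun γ _ => ?_
    rw [← hnum γ, Finset.filter_filter]
    simp only [and_assoc]
  have hapos : ∀ y, 0 < a N y := fun y => Nat.cast_pos.2 (hpos N hN _ y)
  have hWpos : 0 < ∑ γ, a N (j₀, γ) :=
    Finset.sum_pos (fun γ _ => hapos _) ⟨1, Finset.mem_univ _⟩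
  rw [hden]
  refine ⟨hWpos, fun γ => ?_⟩
  rw [hnum γ]
  obtain ⟨l, u, hd, hlu⟩ := hcon N
  have hwW : ∀ h, w N (j₀, h) = ∑ γ, a N (j₀, γ) := fun h => (hsum N j₀).symm
  set W := ∑ γ, a N (j₀, γ) with hW
  have hcard : (0 : ℝ) < Fintype.card Γ := by exact_mod_cast Fintype.card_pos
  have hl1 : l ≤ 1 / (Fintype.card Γ : ℝ) := by
    rw [le_div_iff₀ hcard]
    have h1 : ∑ _h : Γ, l * W ≤ W := by
      conv_rhs => rw [hW]
      exact Finset.sum_le_sum fun h _ => by rw [← hwW h]; exact (hlu _).1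
    rw [Finset.sum_const, nsmul_eq_mul, Finset.card_univ] at h1
    by_contra! hcon'
    nlinarith
  have hu1 : 1 / (Fintype.card Γ : ℝ) ≤ u := by
    rw [div_le_iff₀ hcard]
    have h1 : W ≤ ∑ _h : Γ, u * W := by
      conv_lhs => rw [hW]
      exact Finset.sum_le_sum fun h _ => by rw [← hwW h]; exact (hlu _).2
    rw [Finset.sum_const, nsmul_eq_mul, Finset.card_univ] at h1
    by_contra! hcon'
    nlinarith
  have h2 := hlu (j₀, γ)
  rw [hwW γ] at h2
  have h3 : l ≤ a N (j₀, γ) / W := (le_div_iff₀ hWpos).2 h2.1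
  have h4 : a N (j₀, γ) / W ≤ u := (div_le_iff₀ hWpos).2 h2.2
  rw [abs_le]
  constructor <;> linarith
end

section
/- Fix n ≥ 2. There exists a constant C > 0, depending only on n, such that for every prime p, the number of matrices M in SL(n, ZMod p) whose characteristic polynomial admits a monic factor q ∈ (ZMod p)[X] with 0 < natDegree q < n and q.coeff 0 = 1 is at most C · p^{n²−2}. Since |SL(n, ZMod p)| is asymptotic to p^{n²−1}, the probability that the characteristic polynomial of a uniformly random matrix in SL(n, ZMod p) has a factor with constant coefficient 1 is O(1/p). -/
theorem aux_compl {K : Type*} [Field K] (m k : ℕ) (hk : k ≤ m) (s : Fin k → (Fin m → K)) :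
    ∃ t : Fin (m - k) → (Fin m → K), LinearIndependent K s →
      Submodule.span K (Set.range s ∪ Set.range t) = ⊤ := by
  by_cases hs : LinearIndependent K s
  swap
  · exact ⟨0, fun h => absurd h hs⟩
  obtain ⟨W, hW⟩ := Submodule.exists_isCompl (Submodule.span K (Set.range s))
  have h1 : Module.finrank K (Submodule.span K (Set.range s)) = k := by
    simpa using finrank_span_eq_card hs
  have h2 := Submodule.finrank_add_eq_of_isCompl hW
  have h3 : Module.finrank K W = m - k := by
    simp at h2; omega
  let B := Module.finBasisOfFinrankEq K W h3
  refine ⟨fun i => (B i : Fin m → K), fun _ => ?_⟩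
  rw [Submodule.span_union]
  have h4 : Submodule.span K (Set.range fun i => (B i : Fin m → K)) = W := by
    have : (Set.range fun i => (B i : Fin m → K)) = Set.image W.subtype (Set.range B) := by
      rw [← Set.range_comp]; rfl
    rw [this, Submodule.span_image, B.span_eq]; simp
  rw [h4]
  exact hW.sup_eq_top

open Matrix in
theorem aux_k {K : Type*} [Field K] (m : ℕ) (A : Matrix (Fin m) (Fin m) K) (b : Fin m → K) :
    ∃ k ≤ m, LinearIndependent K (fun i : Fin k => (A ^ (i : ℕ)) *ᵥ b) ∧
      ∃ a : Fin k → K, (A ^ k) *ᵥ b = ∑ i, a i • ((A ^ (i : ℕ)) *ᵥ b) := by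
  classical
  have hex : ∃ k, ¬ LinearIndependent K (fun i : Fin (k+1) => (A ^ (i : ℕ)) *ᵥ b) := by
    refine ⟨m, fun h => ?_⟩
    have := h.fintype_card_le_finrank
    simp at this
  have h1 := Nat.find_spec hex
  set k := Nat.find hex with hk
  have h2 : LinearIndependent K (fun i : Fin k => (A ^ (i : ℕ)) *ᵥ b) := by
    rcases Nat.eq_zero_or_pos k with h0 | h0
    · rw [h0]; exact linearIndependent_empty_type
    · have := Nat.find_min hex (m := k - 1) (by omega)
      rw [not_not, Nat.sub_add_cancel h0] at this
      exact this
  refine ⟨k, ?_, h2, ?_⟩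
  · simpa using h2.fintype_card_le_finrank
  · rw [linearIndependent_finSucc'] at h1
    have h3 : (A ^ k) *ᵥ b ∈ Submodule.span K (Set.range (fun i : Fin k => (A ^ (i : ℕ)) *ᵥ b)) := by
      by_contra h
      apply h1
      refine ⟨h2, ?_⟩
      simpa [Fin.init_def] using h
    rw [Submodule.mem_span_range_iff_exists_fun] at h3
    obtain ⟨a, ha⟩ := h3
    exact ⟨a, ha.symm⟩

open Matrix in
theorem aux_Tk {K : Type*} [Field K] [Finite K] (m k : ℕ) (hk : k ≤ m) :
    Set.ncard {x : Matrix (Fin m) (Fin m) K × (Fin m → K) × (Fin m → K) |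
      (∀ i : ℕ, x.2.2 ⬝ᵥ ((x.1 ^ i) *ᵥ x.2.1) = 0) ∧
      LinearIndependent K (fun i : Fin k => (x.1 ^ (i : ℕ)) *ᵥ x.2.1) ∧
      ∃ a : Fin k → K, (x.1 ^ k) *ᵥ x.2.1 = ∑ i, a i • ((x.1 ^ (i : ℕ)) *ᵥ x.2.1)}
      ≤ (Nat.card K) ^ (m ^ 2 + m) := by
  classical
  choose t ht using aux_compl (K := K) m k hk
  let s : Matrix (Fin m) (Fin m) K × (Fin m → K) × (Fin m → K) → Fin k → (Fin m → K) :=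
    fun x i => (x.1 ^ (i : ℕ)) *ᵥ x.2.1
  let a : Matrix (Fin m) (Fin m) K × (Fin m → K) × (Fin m → K) → Fin k → K :=
    fun x => if h : ∃ a : Fin k → K,
      (x.1 ^ k) *ᵥ x.2.1 = ∑ i, a i • ((x.1 ^ (i : ℕ)) *ᵥ x.2.1) then h.choose else 0
  let φ : Matrix (Fin m) (Fin m) K × (Fin m → K) × (Fin m → K) →
      (Fin k → (Fin m → K)) × (Fin k → K) × (Fin (m-k) → (Fin m → K)) × (Fin (m-k) → K) :=
    fun x => (s x, a x, fun j => x.1 *ᵥ t (s x) j, fun j => x.2.2 ⬝ᵥ t (s x) j)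
  have hcard : (Nat.card K) ^ (m ^ 2 + m) = Set.ncard (Set.univ : Set
      ((Fin k → (Fin m → K)) × (Fin k → K) × (Fin (m-k) → (Fin m → K)) × (Fin (m-k) → K))) := by
    rw [Set.ncard_univ]
    simp only [Nat.card_prod, Nat.card_fun, Nat.card_eq_fintype_card (α := Fin _), Fintype.card_fin]
    obtain ⟨l, rfl⟩ := Nat.exists_eq_add_of_le hk
    simp only [Nat.add_sub_cancel_left]
    rw [← pow_mul, ← pow_mul, ← pow_add, ← pow_add, ← pow_add]
    congr 1; ring
  rw [hcard]
  refine Set.ncard_le_ncard_of_injOn φ (fun _ _ => Set.mem_univ _) ?_ (Set.toFinite _)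
  rintro x ⟨hx1, hx2, hx3⟩ y ⟨hy1, hy2, hy3⟩ hxy
  simp only [φ, Prod.mk.injEq] at hxy
  obtain ⟨e1, e2, e3, e4⟩ := hxy
  have ax : (x.1 ^ k) *ᵥ x.2.1 = ∑ i, a x i • s x i := by
    simp only [a, dif_pos hx3]; exact hx3.choose_spec
  have ay : (y.1 ^ k) *ᵥ y.2.1 = ∑ i, a y i • s y i := by
    simp only [a, dif_pos hy3]; exact hy3.choose_spec
  have e5 : (x.1 ^ k) *ᵥ x.2.1 = (y.1 ^ k) *ᵥ y.2.1 := by rw [ax, ay, e1, e2]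
  have e6 : ∀ i ≤ k, (x.1 ^ i) *ᵥ x.2.1 = (y.1 ^ i) *ᵥ y.2.1 := by
    intro i hi
    rcases hi.lt_or_eq with h | h
    · exact congrFun e1 ⟨i, h⟩
    · rw [h]; exact e5
  have hb : x.2.1 = y.2.1 := by simpa using e6 0 (Nat.zero_le _)
  have hsp := ht (s x) hx2
  have hA : x.1.mulVecLin = y.1.mulVecLin := by
    refine LinearMap.ext_on hsp ?_
    rintro v (⟨i, rfl⟩ | ⟨j, rfl⟩)
    · have h1 := e6 (i+1) i.2
      rw [pow_succ', pow_succ', ← mulVec_mulVec, ← mulVec_mulVec, ← e6 i i.2.le] at h1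
      exact h1
    · have h1 := congrFun e3 j
      simp only [← e1] at h1
      exact h1
  have hc : dotProductBilin K K x.2.2 = dotProductBilin K K y.2.2 := by
    refine LinearMap.ext_on hsp ?_
    rintro v (⟨i, rfl⟩ | ⟨j, rfl⟩)
    · have h1 := hx1 i
      have h2 := hy1 i
      rw [← e6 i i.2.le] at h2
      exact h1.trans h2.symm
    · have h1 := congrFun e4 j
      simp only [← e1] at h1
      exact h1
  refine Prod.ext ?_ (Prod.ext hb ?_)
  · ext i j
    have := congrFun (LinearMap.congr_fun hA (Pi.single j 1)) i
    simpa using this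
  · ext i
    have := LinearMap.congr_fun hc (Pi.single i 1)
    simpa using this

open Matrix in
theorem aux_T {K : Type*} [Field K] [Finite K] (m : ℕ) :
    Set.ncard {x : Matrix (Fin m) (Fin m) K × (Fin m → K) × (Fin m → K) |
      (∀ i : ℕ, x.2.2 ⬝ᵥ ((x.1 ^ i) *ᵥ x.2.1) = 0)}
      ≤ (m + 1) * (Nat.card K) ^ (m ^ 2 + m) := by
  classical
  let T : ℕ → Set (Matrix (Fin m) (Fin m) K × (Fin m → K) × (Fin m → K)) := fun k =>
    {x | (∀ i : ℕ, x.2.2 ⬝ᵥ ((x.1 ^ i) *ᵥ x.2.1) = 0) ∧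
      LinearIndependent K (fun i : Fin k => (x.1 ^ (i : ℕ)) *ᵥ x.2.1) ∧
      ∃ a : Fin k → K, (x.1 ^ k) *ᵥ x.2.1 = ∑ i, a i • ((x.1 ^ (i : ℕ)) *ᵥ x.2.1)}
  have h1 : {x : Matrix (Fin m) (Fin m) K × (Fin m → K) × (Fin m → K) |
      (∀ i : ℕ, x.2.2 ⬝ᵥ ((x.1 ^ i) *ᵥ x.2.1) = 0)} ⊆ ⋃ k ∈ Finset.range (m+1), T k := by
    intro x hx
    obtain ⟨k, hk, h2⟩ := aux_k m x.1 x.2.1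
    simp only [Set.mem_iUnion]
    exact ⟨k, by simpa using Nat.lt_succ_of_le hk, hx, h2⟩
  refine (Set.ncard_le_ncard h1 (Set.toFinite _)).trans ?_
  refine (Finset.set_ncard_biUnion_le _ _).trans ?_
  refine (Finset.sum_le_card_nsmul _ _ ((Nat.card K) ^ (m ^ 2 + m)) ?_).trans ?_
  · intro k hk
    exact aux_Tk m k (by simpa [Nat.lt_succ_iff] using hk)
  · simp

open Matrix in
theorem aux_inv {K : Type*} [Field K] (m : ℕ) (A : Matrix (Fin m) (Fin m) K) :
    (1 - (PowerSeries.X : PowerSeries K) • A.map (PowerSeries.C (R := K))) *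
      (Matrix.of fun i j => PowerSeries.mk fun l => (A ^ l) i j) = 1 := by
  ext i j l
  rw [Matrix.sub_mul, Matrix.one_mul, Matrix.smul_mul, Matrix.sub_apply, Matrix.smul_apply,
    smul_eq_mul, map_sub]
  cases l with
  | zero =>
    simp [Matrix.one_apply]
  | succ l =>
    rw [PowerSeries.coeff_succ_X_mul, Matrix.mul_apply, map_sum]
    simp only [of_apply, PowerSeries.coeff_mk, map_apply, PowerSeries.coeff_C_mul]
    rw [pow_succ', Matrix.mul_apply, sub_self, Matrix.one_apply]
    split_ifs <;> simp [PowerSeries.coeff_one]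

open Matrix in
theorem aux_rev {K : Type*} [Field K] (m : ℕ) (A : Matrix (Fin m) (Fin m) K)
    (b : Matrix (Fin m) Unit K) (c : Matrix Unit (Fin m) K) (d : Matrix Unit Unit K) :
    ((fromBlocks A b c d).charpolyRev : PowerSeries K) =
      (1 - (PowerSeries.X : PowerSeries K) • A.map (PowerSeries.C (R := K))).det *
      (1 - PowerSeries.X * PowerSeries.C (d () ()) - PowerSeries.X * (PowerSeries.X *
        PowerSeries.mk fun l => (c * A ^ l * b) () ())) := by
  have hinv := aux_inv m A
  set P := (1 - (PowerSeries.X : PowerSeries K) • A.map (PowerSeries.C (R := K))) with hP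
  set N : Matrix (Fin m) (Fin m) (PowerSeries K) :=
    (Matrix.of fun i j => PowerSeries.mk fun l => (A ^ l) i j) with hN
  let _ : Invertible P := invertibleOfRightInverse P N hinv
  have hPN : ⅟P = N := invOf_eq_right_inv hinv
  have h1 : ((fromBlocks A b c d).charpolyRev : PowerSeries K) =
      (fromBlocks P (-((PowerSeries.X : PowerSeries K) • b.map (PowerSeries.C (R := K))))
        (-((PowerSeries.X : PowerSeries K) • c.map (PowerSeries.C (R := K))))
        (1 - (PowerSeries.X : PowerSeries K) • d.map (PowerSeries.C (R := K)))).det := by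
    rw [charpolyRev, ← Polynomial.coeToPowerSeries.ringHom_apply, RingHom.map_det]
    congr 1
    ext i j : 2
    rcases i with i | i <;> rcases j with j | j <;>
      (simp [hP, Matrix.one_apply, apply_ite]; try exact mul_comm _ _)
  rw [h1, det_fromBlocks₁₁, hPN]
  congr 1
  rw [det_unique]
  have h2 : ((c.map (PowerSeries.C (R := K))) * N * (b.map (PowerSeries.C (R := K)))) () () =
      PowerSeries.mk fun l => (c * A ^ l * b) () () := by
    ext l
    simp [Matrix.mul_apply, hN, Finset.sum_mul]
  simp only [Matrix.neg_mul, Matrix.mul_neg, Matrix.smul_mul, Matrix.mul_smul]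
  rw [← h2]
  simp

open Matrix in
theorem aux_fiber {K : Type*} [Field K] (m : ℕ) (A : Matrix (Fin m) (Fin m) K)
    (b b' : Matrix (Fin m) Unit K) (c : Matrix Unit (Fin m) K) (d d' : Matrix Unit Unit K)
    (h : (fromBlocks A b c d).charpoly = (fromBlocks A b' c d').charpoly) :
    d = d' ∧ ∀ l : ℕ, c * A ^ l * b = c * A ^ l * b' := by
  have h1 : ((fromBlocks A b c d).charpolyRev : PowerSeries K) =
      ((fromBlocks A b' c d').charpolyRev : PowerSeries K) := by
    rw [← reverse_charpoly, ← reverse_charpoly, h]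
  rw [aux_rev, aux_rev] at h1
  have hu : IsUnit (1 - (PowerSeries.X : PowerSeries K) • A.map (PowerSeries.C (R := K))).det := by
    have := congrArg det (aux_inv m A)
    rw [det_mul, det_one] at this
    exact IsUnit.of_mul_eq_one _ this
  have h2 := hu.mul_left_cancel h1
  have h3 : d () () = d' () () := by
    have := congrArg (PowerSeries.coeff 1) h2
    simp only [map_sub] at this
    have hx : ∀ φ : PowerSeries K, PowerSeries.coeff 1 (PowerSeries.X * φ) =
      PowerSeries.coeff 0 φ := fun φ => PowerSeries.coeff_succ_X_mul 0 φ
    simp only [hx] at this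
    simpa using this
  refine ⟨by ext ⟨⟩ ⟨⟩; exact h3, fun l => ?_⟩
  ext ⟨⟩ ⟨⟩
  rw [h3] at h2
  have := congrArg (PowerSeries.coeff (l+1+1)) h2
  simp only [map_sub, PowerSeries.coeff_succ_X_mul, PowerSeries.coeff_mk] at this
  simpa using this

open Matrix in
theorem aux_key {K : Type*} [Field K] [Finite K] (m : ℕ) (f : Polynomial K) :
    Set.ncard {M : Matrix (Fin m ⊕ Unit) (Fin m ⊕ Unit) K | M.charpoly = f}
      ≤ (m + 1) * (Nat.card K) ^ (m ^ 2 + m) := by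
  classical
  refine le_trans ?_ (aux_T (K := K) m)
  let b0 : Matrix (Fin m) (Fin m) K → Matrix Unit (Fin m) K → Matrix (Fin m) Unit K :=
    fun A c => if h : ∃ b d, (fromBlocks A b c d).charpoly = f then h.choose else 0
  have hb0 : ∀ (A : Matrix (Fin m) (Fin m) K) (b : Matrix (Fin m) Unit K)
      (c : Matrix Unit (Fin m) K) (d : Matrix Unit Unit K), (fromBlocks A b c d).charpoly = f → ∀ b' d',
      (fromBlocks A b' c d').charpoly = f → d = d' := by
    intro A b c d h b' d' h'
    exact (aux_fiber m A b b' c d d' (h.trans h'.symm)).1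
  have hb1 : ∀ (A : Matrix (Fin m) (Fin m) K) (b : Matrix (Fin m) Unit K)
      (c : Matrix Unit (Fin m) K) (d : Matrix Unit Unit K),
      (fromBlocks A b c d).charpoly = f →
      ∀ l : ℕ, c * A ^ l * (b - b0 A c) = 0 := by
    intro A b c d h l
    have hex : ∃ b d, (fromBlocks A b c d).charpoly = f := ⟨b, d, h⟩
    obtain ⟨d', hd'⟩ := hex.choose_spec
    have := (aux_fiber m A b _ c d d' (h.trans hd'.symm)).2 l
    simp only [b0, dif_pos hex]
    rw [Matrix.mul_sub, this, sub_self]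
  refine Set.ncard_le_ncard_of_injOn (fun M => (M.toBlocks₁₁,
    (fun i => (M.toBlocks₁₂ - b0 M.toBlocks₁₁ M.toBlocks₂₁) i ()),
    (fun i => M.toBlocks₂₁ () i))) ?_ ?_ (Set.toFinite _)
  · intro M hM l
    have hM' : M.charpoly = f := hM
    rw [← fromBlocks_toBlocks M] at hM'
    have := congrFun (congrFun (hb1 _ _ _ _ hM' l) ()) ()
    rw [Matrix.mul_assoc] at this
    exact this
  · intro M hM M' hM' hMM
    simp only [Prod.mk.injEq] at hMM
    obtain ⟨e1, e2, e3⟩ := hMM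
    have hM1 : M.charpoly = f := hM
    have hM1' : M'.charpoly = f := hM'
    have e3' : M.toBlocks₂₁ = M'.toBlocks₂₁ := by
      ext ⟨⟩ i; exact congrFun e3 i
    have e2' : M.toBlocks₁₂ = M'.toBlocks₁₂ := by
      ext i ⟨⟩
      have := congrFun e2 i
      rw [e1, e3'] at this
      simpa using this
    rw [← fromBlocks_toBlocks M] at hM1
    rw [← fromBlocks_toBlocks M', ← e1, ← e3'] at hM1'
    have e4 := hb0 _ _ _ _ hM1 _ _ hM1'
    rw [← fromBlocks_toBlocks M, ← fromBlocks_toBlocks M', e1, e2', e3', e4]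

/-- monic polynomials of given degree and constant coefficient -/
def monicSet (K : Type*) [Field K] (k : ℕ) (e : K) : Set (Polynomial K) :=
  {q | q.Monic ∧ q.natDegree = k ∧ q.coeff 0 = e}

theorem aux_inj {K : Type*} [Field K] (k : ℕ) (e : K) :
    Set.InjOn (fun (q : Polynomial K) (i : Fin (k-1)) => q.coeff (i+1)) (monicSet K k e) := by
  rintro q ⟨h1, h2, h3⟩ r ⟨g1, g2, g3⟩ h
  ext i
  rcases Nat.eq_zero_or_pos i with rfl | hi
  · rw [h3, g3]
  rcases lt_trichotomy i k with h4 | h4 | h4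
  · have := congrFun h ⟨i-1, by omega⟩
    simpa [Nat.sub_add_cancel hi] using this
  · subst h4
    have a1 := h1.coeff_natDegree
    have a2 := g1.coeff_natDegree
    rw [h2] at a1
    rw [g2] at a2
    rw [a1, a2]
  · rw [Polynomial.coeff_eq_zero_of_natDegree_lt (by omega),
      Polynomial.coeff_eq_zero_of_natDegree_lt (by omega)]

theorem aux_fin {K : Type*} [Field K] [Finite K] (k : ℕ) (e : K) :
    (monicSet K k e).Finite :=
  Set.Finite.of_finite_image (Set.toFinite _) (aux_inj k e)

theorem aux_cardm {K : Type*} [Field K] [Finite K] (k : ℕ) (e : K) :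
    (monicSet K k e).ncard ≤ Nat.card K ^ (k - 1) := by
  have := Set.ncard_le_ncard_of_injOn (t := Set.univ) _ (fun _ _ => Set.mem_univ _) (aux_inj k e)
    (Set.toFinite _)
  simpa [Set.ncard_univ, Nat.card_fun] using this

/-- products -/
def prodSet (K : Type*) [Field K] (m : ℕ) (e : K) (k : ℕ) : Set (Polynomial K) :=
  Set.image (fun x : Polynomial K × Polynomial K => x.1 * x.2)
    (monicSet K (k + 1) 1 ×ˢ monicSet K (m - k) e)

theorem aux_prod {K : Type*} [Field K] [Finite K] (m : ℕ) (e : K) (k : ℕ) (hk : k < m) :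
    (prodSet K m e k).ncard ≤ Nat.card K ^ (m - 1) := by
  refine (Set.ncard_image_le ((aux_fin _ _).prod (aux_fin _ _))).trans ?_
  rw [Set.ncard_prod]
  refine (Nat.mul_le_mul (aux_cardm _ _) (aux_cardm _ _)).trans ?_
  rw [← pow_add]
  apply le_of_eq
  congr 1; omega

theorem aux_main {K : Type*} [Field K] [Finite K] (m : ℕ) :
    Set.ncard {M : Matrix.SpecialLinearGroup (Fin (m+1)) K |
          ∃ q : Polynomial K, q.Monic ∧ 0 < q.natDegree ∧
            q.natDegree < m + 1 ∧ q.coeff 0 = 1 ∧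
            q ∣ Matrix.charpoly (M : Matrix (Fin (m+1)) (Fin (m+1)) K)} ≤
      ((m + 1) * (Nat.card K) ^ (m ^ 2 + m)) * (m * Nat.card K ^ (m - 1)) := by
  classical
  set S := {M : Matrix.SpecialLinearGroup (Fin (m+1)) K |
          ∃ q : Polynomial K, q.Monic ∧ 0 < q.natDegree ∧
            q.natDegree < m + 1 ∧ q.coeff 0 = 1 ∧
            q ∣ Matrix.charpoly (M : Matrix (Fin (m+1)) (Fin (m+1)) K)} with hS
  have : Finite (Matrix.SpecialLinearGroup (Fin (m+1)) K) := Subtype.finite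
  let F : Set (Polynomial K) := ⋃ k ∈ Finset.range m, prodSet K m ((-1)^(m+1)) k
  have hF : F.Finite := by
    refine Set.Finite.biUnion (Finset.finite_toSet _) fun k _ => ?_
    exact ((aux_fin _ _).prod (aux_fin _ _)).image _
  have hFc : F.ncard ≤ m * Nat.card K ^ (m - 1) := by
    refine (Finset.set_ncard_biUnion_le _ _).trans ?_
    refine (Finset.sum_le_card_nsmul _ _ (Nat.card K ^ (m - 1)) ?_).trans ?_
    · intro k hk
      exact aux_prod m _ k (by simpa using hk)
    · simp
  let e : Fin (m+1) ≃ Fin m ⊕ Unit := Fintype.equivOfCardEq (by simp)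
  refine le_trans ?_ (Nat.mul_le_mul_left _ hFc)
  rw [Set.ncard_eq_toFinset_card S (Set.toFinite _), Set.ncard_eq_toFinset_card F hF]
  refine Finset.card_le_mul_card_image_of_maps_to
    (f := fun M : Matrix.SpecialLinearGroup (Fin (m+1)) K => (M : Matrix (Fin (m+1)) (Fin (m+1)) K).charpoly) ?_ _ ?_
  · intro M hM
    rw [Set.Finite.mem_toFinset] at hM ⊢
    obtain ⟨q, h1, h2, h3, h4, r, hr⟩ := hM
    have hmon := Matrix.charpoly_monic (M : Matrix (Fin (m+1)) (Fin (m+1)) K)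
    have hdeg := Matrix.charpoly_natDegree_eq_dim (M : Matrix (Fin (m+1)) (Fin (m+1)) K)
    have hdet := Matrix.det_eq_sign_charpoly_coeff (M : Matrix (Fin (m+1)) (Fin (m+1)) K)
    rw [hr] at hmon hdeg hdet
    have hrm : r.Monic := h1.of_mul_monic_left hmon
    rw [h1.natDegree_mul hrm, Fintype.card_fin] at hdeg
    rw [M.det_coe, Polynomial.mul_coeff_zero, h4, one_mul, Fintype.card_fin] at hdet
    simp only [F, Set.mem_iUnion]
    refine ⟨q.natDegree - 1, by simp; omega, (q, r), ⟨⟨h1, by dsimp only; omega, h4⟩, hrm, by dsimp only; omega, ?_⟩,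
      hr.symm⟩
    have h5 : ((-1 : K)^(m+1)) * (-1)^(m+1) = 1 := by
      rw [← mul_pow]; simp
    calc r.coeff 0 = ((-1 : K)^(m+1) * (-1)^(m+1)) * r.coeff 0 := by rw [h5, one_mul]
      _ = _ := by rw [mul_assoc, ← hdet, mul_one]
  · intro f _
    refine le_trans ?_ (aux_key (K := K) m f)
    rw [← Set.ncard_coe_finset]
    refine Set.ncard_le_ncard_of_injOn
      (fun M => Matrix.reindex e e (M : Matrix (Fin (m+1)) (Fin (m+1)) K)) ?_ ?_ (Set.toFinite _)
    · intro M hM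
      simp only [Finset.coe_filter, Set.mem_ofPred_eq] at hM ⊢
      rw [Matrix.charpoly_reindex]
      exact hM.2
    · intro M _ M' _ h
      exact Subtype.ext ((Matrix.reindex e e).injective h)

/-- the number of matrices in `SL(n, ZMod p)` whose
characteristic polynomial has a monic proper factor with constant coefficient
`1` is `O(p^{n²-2})`, uniformly in the prime `p`; since
`|SL(n, ZMod p)| ~ p^{n²-1}`, the probability of this event is `O(1/p)`. -/
theorem stmt7 (n : ℕ) (hn : 2 ≤ n) :
    ∃ C : ℝ, 0 < C ∧ ∀ p : ℕ, p.Prime →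
      (Set.ncard {M : Matrix.SpecialLinearGroup (Fin n) (ZMod p) |
          ∃ q : Polynomial (ZMod p), q.Monic ∧ 0 < q.natDegree ∧
            q.natDegree < n ∧ q.coeff 0 = 1 ∧
            q ∣ Matrix.charpoly (M : Matrix (Fin n) (Fin n) (ZMod p))} : ℝ)
        ≤ C * (p : ℝ) ^ (n ^ 2 - 2) := by
  obtain ⟨m, rfl⟩ : ∃ m, n = m + 1 := ⟨n - 1, by omega⟩
  have hm : 1 ≤ m := by omega
  refine ⟨((m + 1) * m : ℕ), by exact_mod_cast Nat.mul_pos (Nat.succ_pos _) hm, fun p hp => ?_⟩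
  have : Fact p.Prime := ⟨hp⟩
  have h := aux_main (K := ZMod p) m
  rw [Nat.card_zmod] at h
  have e : ((m + 1) * p ^ (m ^ 2 + m)) * (m * p ^ (m - 1)) =
      ((m + 1) * m) * p ^ ((m + 1) ^ 2 - 2) := by
    have : (m + 1) ^ 2 - 2 = (m ^ 2 + m) + (m - 1) := by
      have : (m + 1) ^ 2 = m ^ 2 + m + m + 1 := by ring
      omega
    rw [this, pow_add]; ring
  rw [e] at h
  exact_mod_cast h
end
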